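/- arXiv:0903.2864 — 2 statements merged into one kernel-verified Lean document; each statement's English description precedes it below -/
import Mathlib

section
/- Let G_5 be the subgroup of S_5 generated by the 5-cycle (1 2 3 4 5) and the 4-cycle (2 3 5 4); G_5 is a Frobenius group of order 20. For every n ≥ 5, letting G_5 × S_{n−5} denote the subgroup of S_n of permutations g that map the block {1,…,5} to itself, act on {1,…,5} as an element of G_5, and act arbitrarily on {6,…,n}, the permutation character of S_n on the cosets of G_5 × S_{n−5} is multiplicity-free. -/
/-- The permutation character of `G` on the cosets of `H` is multiplicity-free:
every irreducible complex representation of `G` has at most a one-dimensional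
subspace of `H`-fixed vectors. -/
noncomputable def IsMultFree {G : Type} [Group G] (H : Subgroup G) : Prop :=
  ∀ V : FDRep ℂ G, CategoryTheory.Simple V →
    Module.finrank ℂ (Representation.invariants (V.ρ.comp H.subtype)) ≤ 1

/-- The Frobenius group of order 20, generated inside `S_5` by the 5-cycle
`(1 2 3 4 5)` and the 4-cycle `(2 3 5 4)` (written here on `{0,…,4}` as the
rotation `i ↦ i + 1` and the cycle `(1 2 4 3)`). -/
def frobenius20 : Subgroup (Equiv.Perm (Fin 5)) :=
  Subgroup.closure
    {finRotate 5, Equiv.swap (1 : Fin 5) 2 * Equiv.swap (2 : Fin 5) 4 * Equiv.swap (4 : Fin 5) 3}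

/-!
By Gelfand's trick it suffices that `g⁻¹ ∈ K g K` for all `g`, where `K = G₅ × S_m`: the operators
`e g e` with `e` the averaging projection onto the `K`-fixed vectors then satisfy
`e g e = e g⁻¹ e`, so they commute; as they act irreducibly on the fixed vectors of an irreducible
representation, this space is at most a line.

In fact every coset `K g` contains an involution `u = k g`, whence `g⁻¹ = u k = k g k`. The upper
left `5 × 5` corner of the permutation matrix of `g` is a partial bijection of five points. It
can be made symmetric by an element of `G₅`: `G₅` is sharply 2-transitive, so only restrictions
of permutations fixing two points have to be examined. Once the corner is symmetric, the remaining
rows can be permuted by `S_m` so that the whole matrix is symmetric.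
-/

section Gelfand

open Representation

variable {k G V : Type*} [Group G] [AddCommGroup V]

section HeckeOperator

variable [CommRing k] [Module k V]

theorem averageMap_eq_smul_sum (ρ : Representation k G V) [Fintype G]
    [Invertible (Fintype.card G : k)] (v : V) :
    ρ.averageMap v = ⅟(Fintype.card G : k) • ∑ g, ρ g v := by
  simp [GroupAlgebra.average]

theorem averageMap_apply_self (ρ : Representation k G V) [Fintype G]
    [Invertible (Fintype.card G : k)] (g : G) (v : V) :
    ρ.averageMap (ρ g v) = ρ.averageMap v := by
  rw [averageMap, ← asAlgebraHom_single_one, ← Module.End.mul_apply, ← map_mul,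
    GroupAlgebra.mul_average_right]

variable (ρ : Representation k G V) (H : Subgroup G) [Fintype H] [Invertible (Fintype.card H : k)]

/-- The action of the Hecke algebra of `(G, H)` on the `H`-invariants of `ρ`: the double coset of
`g` acts by `v ↦ e (g v)`, where `e` is the projection averaging over `H` (so that no factor
counting the cosets in `H g H` appears). -/
noncomputable def heckeOperator (g : G) : Module.End k (invariants (ρ.comp H.subtype)) :=
  (averageMap (ρ.comp H.subtype) ∘ₗ ρ g).restrict fun _ _ => averageMap_invariant _ _

variable {H}

theorem coe_heckeOperator_apply (g : G) (v : invariants (ρ.comp H.subtype)) :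
    (heckeOperator ρ H g v : V) = averageMap (ρ.comp H.subtype) (ρ g v) :=
  rfl

theorem heckeOperator_eq_of_mem_doubleCoset {g g' : G} (hg : g' ∈ DoubleCoset.doubleCoset g H H) :
    heckeOperator ρ H g' = heckeOperator ρ H g := by
  obtain ⟨h₁, hh₁, h₂, hh₂, rfl⟩ := DoubleCoset.mem_doubleCoset.1 hg
  ext v
  have hv : ρ h₂ v = v := v.2 ⟨h₂, hh₂⟩
  simp only [coe_heckeOperator_apply, map_mul, Module.End.mul_apply, hv]
  exact averageMap_apply_self (ρ.comp H.subtype) ⟨h₁, hh₁⟩ _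

theorem heckeOperator_mul (x y : G) :
    heckeOperator ρ H x * heckeOperator ρ H y =
      ⅟(Fintype.card H : k) • ∑ h : H, heckeOperator ρ H (x * h * y) := by
  ext v
  simp only [Module.End.mul_apply, coe_heckeOperator_apply, averageMap_eq_smul_sum _ (ρ y v),
    LinearMap.smul_apply, LinearMap.sum_apply, Submodule.coe_smul, Submodule.coe_sum,
    map_smul, map_sum, map_mul]
  rfl

theorem heckeOperator_commute (hH : ∀ g : G, g⁻¹ ∈ DoubleCoset.doubleCoset g H H) (x y : G) :
    heckeOperator ρ H x * heckeOperator ρ H y = heckeOperator ρ H y * heckeOperator ρ H x := by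
  have hinv (g : G) : heckeOperator ρ H g⁻¹ = heckeOperator ρ H g :=
    heckeOperator_eq_of_mem_doubleCoset ρ (hH g)
  calc heckeOperator ρ H x * heckeOperator ρ H y
      = ⅟(Fintype.card H : k) • ∑ h : H, heckeOperator ρ H (x * h * y) := heckeOperator_mul ρ x y
    _ = ⅟(Fintype.card H : k) • ∑ h : H, heckeOperator ρ H (y⁻¹ * h * x⁻¹) := by
        congr 1
        refine Fintype.sum_equiv (Equiv.inv H) _ _ fun h => ?_
        rw [← hinv (x * h * y)]
        simp [mul_assoc]
    _ = heckeOperator ρ H y * heckeOperator ρ H x := by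
        rw [← heckeOperator_mul, hinv, hinv]

end HeckeOperator

variable [Field k] [Module k V]

theorem eq_bot_or_eq_top_of_le_comap_heckeOperator (ρ : Representation k G V)
    [ρ.IsIrreducible] {H : Subgroup G} [Fintype H] [Invertible (Fintype.card H : k)]
    (U : Submodule k (invariants (ρ.comp H.subtype)))
    (hU : ∀ g, U ≤ U.comap (heckeOperator ρ H g)) : U = ⊥ ∨ U = ⊤ := by
  let e := averageMap (ρ.comp H.subtype)
  have he (u : invariants (ρ.comp H.subtype)) : e u = u := averageMap_id _ _ u.2
  let N : Subrepresentation ρ :=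
    { toSubmodule := ⨅ g, (U.map (Submodule.subtype _)).comap (e ∘ₗ ρ g)
      apply_mem_toSubmodule g v hv := by
        simp only [Submodule.mem_iInf, Submodule.mem_comap, LinearMap.comp_apply] at hv ⊢
        intro g'
        simpa only [map_mul, Module.End.mul_apply] using hv (g' * g) }
  have mem_N {v : V} : v ∈ N ↔ ∀ g, e (ρ g v) ∈ U.map (Submodule.subtype _) :=
    Submodule.mem_iInf _
  rcases eq_bot_or_eq_top N with hN | hN
  · refine .inl ((Submodule.eq_bot_iff U).2 fun u hu => Subtype.ext ?_)
    have : (u : V) ∈ N := mem_N.2 fun g => ⟨heckeOperator ρ H g u, hU g hu, rfl⟩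
    rw [hN] at this
    exact this
  · refine .inr (Submodule.eq_top_iff'.2 fun w => ?_)
    have : (w : V) ∈ N := hN ▸ Submodule.mem_top
    simpa [he] using mem_N.1 this 1

theorem finrank_eq_one_of_pairwise_commute [IsAlgClosed k] [FiniteDimensional k V] [Nontrivial V]
    {S : Set (Module.End k V)} (hcomm : ∀ f ∈ S, ∀ g ∈ S, f * g = g * f)
    (hS : ∀ U : Submodule k V, (∀ f ∈ S, U ≤ U.comap f) → U = ⊥ ∨ U = ⊤) :
    Module.finrank k V = 1 := by
  have := Algebra.isMulCommutative_adjoin k hcomm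
  have : IsSimpleModule (Algebra.adjoin k S) V := by
    rw [isSimpleModule_iff]
    refine { eq_bot_or_eq_top := fun U => ?_ }
    rw [← Submodule.restrictScalars_eq_bot_iff (S := k), ← Submodule.restrictScalars_eq_top_iff k]
    exact hS _ fun f hf u hu => U.smul_mem ⟨f, Algebra.subset_adjoin hf⟩ hu
  exact IsSimpleModule.finrank_eq_one_of_isMulCommutative (Algebra.adjoin k S) V k

theorem finrank_invariants_le_one_of_inv_mem_doubleCoset [IsAlgClosed k] [FiniteDimensional k V]
    (ρ : Representation k G V) [ρ.IsIrreducible] (H : Subgroup G) [Fintype H]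
    [Invertible (Fintype.card H : k)] (hH : ∀ g : G, g⁻¹ ∈ DoubleCoset.doubleCoset g H H) :
    Module.finrank k (invariants (ρ.comp H.subtype)) ≤ 1 := by
  rcases subsingleton_or_nontrivial (invariants (ρ.comp H.subtype)) with _ | _
  · exact (Module.finrank_zero_of_subsingleton (R := k)).trans_le zero_le_one
  · refine (finrank_eq_one_of_pairwise_commute (S := Set.range (heckeOperator ρ H)) ?_ ?_).le
    · rintro _ ⟨x, rfl⟩ _ ⟨y, rfl⟩
      exact heckeOperator_commute ρ hH x y
    · exact fun U hU =>
        eq_bot_or_eq_top_of_le_comap_heckeOperator ρ U fun g => hU _ ⟨g, rfl⟩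

end Gelfand

section Simple

open CategoryTheory

universe u v

variable {k : Type u} {G : Type v} [Field k] [Monoid G] {V : FDRep k G}

/-- The inclusion of a subrepresentation, as a morphism in `FDRep k G`. -/
noncomputable def subrepresentationι (N : Subrepresentation (G := G) V.ρ) :
    FDRep.of N.toRepresentation ⟶ V where
  hom := InducedCategory.homMk (ModuleCat.ofHom N.toSubmodule.subtype)
  comm _ := rfl

instance (N : Subrepresentation (G := G) V.ρ) : Mono (subrepresentationι N) :=
  ConcreteCategory.mono_of_injective _ Subtype.val_injective

theorem isIrreducible_of_simple (V : FDRep k G) [Simple V] :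
    Representation.IsIrreducible (G := G) V.ρ where
  exists_pair_ne := by
    refine ⟨⊥, ⊤, fun h => id_nonzero V ?_⟩
    ext v
    exact (h ▸ Submodule.mem_top : v ∈ (⊥ : Subrepresentation (G := G) V.ρ))
  eq_bot_or_eq_top N := by
    by_cases h : subrepresentationι N = 0
    · refine .inl (le_bot_iff.1 fun v hv => ?_)
      exact ConcreteCategory.congr_hom h (⟨v, hv⟩ : N.toSubmodule)
    · have := isIso_of_mono_of_nonzero h
      have hsurj : Function.Surjective (subrepresentationι N) :=
        ((ConcreteCategory.isIso_iff_bijective _).1 this).2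
      refine .inr (top_le_iff.1 fun v _ => ?_)
      obtain ⟨x, rfl⟩ := hsurj v
      exact x.2

end Simple

theorem isMultFree_of_forall_inv_mem_doubleCoset {G : Type} [Group G] {H : Subgroup G} [Finite H]
    (hH : ∀ g : G, g⁻¹ ∈ DoubleCoset.doubleCoset g H H) : IsMultFree H := by
  intro V _
  have := Fintype.ofFinite H
  have := invertibleOfNonzero (Nat.cast_ne_zero.2 Fintype.card_ne_zero : (Fintype.card H : ℂ) ≠ 0)
  have := isIrreducible_of_simple V
  exact finrank_invariants_le_one_of_inv_mem_doubleCoset V.ρ H hH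

section PartialInvolutions

open Equiv Equiv.Perm Sum

variable {α β : Type*}

/-- Every partial bijection of `α` can be composed with an element of `H` so as to become an
involution of its domain. A partial bijection is encoded as the restriction of a permutation `q` to
a finite set `D`; for finite `α` this covers all of them. -/
def HasPartialInvolutions (H : Subgroup (Perm α)) : Prop :=
  ∀ (q : Perm α) (D : Finset α), ∃ a ∈ H, ∀ x ∈ D, a (q x) ∈ D ∧ a (q (a (q x))) = x

theorem exists_perm_eqOn_of_injOn [Finite α] {s : Set α} {f : α → α} (hf : s.InjOn f) :
    ∃ σ : Perm α, s.EqOn σ f := by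
  have := Fintype.ofFinite α
  obtain ⟨e, he⟩ := Set.MapsTo.exists_equiv_extend_of_card_eq (t := .univ) rfl (by simp) hf
  exact ⟨e.trans (Equiv.subtypeUnivEquiv Finset.mem_univ), he⟩

theorem exists_perm_forall_apply_inl_eq_inl [Finite α] (g : Perm (α ⊕ β)) :
    ∃ q : Perm α, ∀ x y, g (inl x) = inl y → q x = y := by
  let f (x : α) : α := Sum.elim id (fun _ => x) (g (inl x))
  have hf {x y : α} (h : g (inl x) = inl y) : f x = y := by simp [f, h]
  have hinj : {x | ∃ y, g (inl x) = inl y}.InjOn f := by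
    rintro x ⟨y, hy⟩ x' ⟨y', hy'⟩ hxx'
    rw [hf hy, hf hy'] at hxx'
    exact inl_injective (g.injective (by rw [hy, hy', hxx']))
  obtain ⟨q, hq⟩ := exists_perm_eqOn_of_injOn hinj
  exact ⟨q, fun x y h => (hq ⟨y, h⟩).trans (hf h)⟩

theorem exists_sumCongrHom_one_eq [Finite α] [Finite β] {σ : Perm (α ⊕ β)}
    (hσ : ∀ x, σ (inl x) = inl x) : ∃ t : Perm β, sumCongrHom α β (1, t) = σ := by
  obtain ⟨⟨s, t⟩, hst⟩ := mem_sumCongrHom_range_of_perm_mapsTo_inl (σ := σ) (by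
    rintro _ ⟨x, rfl⟩
    exact ⟨x, (hσ x).symm⟩)
  have hs : s = 1 := by
    ext x
    simpa [← hst] using hσ x
  exact ⟨t, hs ▸ hst⟩

theorem exists_involutive_sumCongrHom_one_mul [Finite α] [Finite β] {g : Perm (α ⊕ β)}
    (hg : ∀ x y, g (inl x) = inl y → g (inl y) = inl x) :
    ∃ t : Perm β, Function.Involutive (sumCongrHom α β (1, t) * g) := by
  let u (z : α ⊕ β) : α ⊕ β := if z.isLeft then g⁻¹ z else if (g z).isLeft then g z else z
  have u_inl (x : α) : u (inl x) = g⁻¹ (inl x) := by simp [u]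
  have u_inv_inl (x : α) : u (g⁻¹ (inl x)) = inl x := by
    rcases h : g⁻¹ (inl x) with y | b
    · have hy : g (inl y) = inl x := by simp [← h]
      rw [u_inl, inv_eq_iff_eq, hg y x hy]
    · have hb : g (inr b) = inl x := by simp [← h]
      simp [u, hb]
  have hu : Function.Involutive u := by
    rintro (x | b)
    · rw [u_inl, u_inv_inl]
    · rcases h : g (inr b) with y | c
      · have hb : g⁻¹ (inl y) = inr b := by simp [← h]
        rw [← hb, u_inv_inl, u_inl]
      · simp [u, h]
  obtain ⟨t, ht⟩ := exists_sumCongrHom_one_eq (σ := hu.toPerm * g⁻¹) u_inv_inl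
  refine ⟨t, ?_⟩
  rw [ht, inv_mul_cancel_right]
  exact hu

namespace HasPartialInvolutions

variable {H : Subgroup (Perm α)}

theorem exists_mul_apply_inl_symm [Finite α] (hH : HasPartialInvolutions H) (g : Perm (α ⊕ β)) :
    ∃ a ∈ H, ∀ x y, (sumCongrHom α β (a, 1) * g) (inl x) = inl y →
      (sumCongrHom α β (a, 1) * g) (inl y) = inl x := by
  have := Fintype.ofFinite α
  obtain ⟨q, hq⟩ := exists_perm_forall_apply_inl_eq_inl g
  obtain ⟨a, ha, hinv⟩ := hH q {x | (g (inl x)).isLeft}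
  have hq' {x : α} (hx : (g (inl x)).isLeft) :
      (sumCongrHom α β (a, 1) * g) (inl x) = inl (a (q x)) := by
    obtain ⟨y, hy⟩ := isLeft_iff.1 hx
    simp [hy, hq x y hy]
  refine ⟨a, ha, fun x y hxy => ?_⟩
  have hx : (g (inl x)).isLeft := by
    rcases h : g (inl x) with z | b <;> simp_all
  obtain ⟨hD, hxx⟩ := hinv x (by simpa using hx)
  obtain rfl : a (q x) = y := inl_injective ((hq' hx).symm.trans hxy)
  rw [hq' (by simpa using hD), hxx]

theorem exists_involutive_mul [Finite α] [Finite β] (hH : HasPartialInvolutions H)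
    (g : Perm (α ⊕ β)) :
    ∃ k ∈ (H.prod ⊤).map (sumCongrHom α β), Function.Involutive (k * g) := by
  obtain ⟨a, ha, hsymm⟩ := hH.exists_mul_apply_inl_symm g
  obtain ⟨t, ht⟩ := exists_involutive_sumCongrHom_one_mul hsymm
  refine ⟨sumCongrHom α β ((1, t) * (a, 1)), ⟨_, by simpa [Subgroup.mem_prod] using ha, rfl⟩, ?_⟩
  rwa [map_mul, mul_assoc]

theorem inv_mem_doubleCoset [Finite α] [Finite β] (hH : HasPartialInvolutions H)
    (g : Perm (α ⊕ β)) :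
    g⁻¹ ∈ DoubleCoset.doubleCoset g ((H.prod ⊤).map (sumCongrHom α β))
      ((H.prod ⊤).map (sumCongrHom α β)) := by
  obtain ⟨k, hk, hinv⟩ := hH.exists_involutive_mul g
  have hsq : k * g * (k * g) = 1 := Equiv.ext hinv
  refine DoubleCoset.mem_doubleCoset.2 ⟨k, hk, k, hk, inv_eq_of_mul_eq_one_left ?_⟩
  rwa [mul_assoc]

end HasPartialInvolutions

end PartialInvolutions

section Frobenius

open Equiv

/-- The affine permutation `i ↦ 2 ^ k * i + d` of `ℤ/5`, as a word in the generators of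
`frobenius20`. -/
def affinePerm (d k : ℕ) : Perm (Fin 5) :=
  finRotate 5 ^ d * (swap (1 : Fin 5) 2 * swap (2 : Fin 5) 4 * swap (4 : Fin 5) 3) ^ k

theorem affinePerm_mem_frobenius20 (d k : ℕ) : affinePerm d k ∈ frobenius20 :=
  mul_mem (pow_mem (Subgroup.subset_closure (by simp)) d)
    (pow_mem (Subgroup.subset_closure (by simp)) k)

theorem exists_affinePerm_apply_zero_one :
    ∀ x y : Fin 5, x ≠ y → ∃ d < 5, ∃ k < 4, affinePerm d k 0 = x ∧ affinePerm d k 1 = y := by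
  decide +kernel

theorem exists_affinePerm_partialInvolution_of_fixed :
    ∀ r : Perm (Fin 5), r 0 = 0 → r 1 = 1 → ∀ D : Finset (Fin 5), ∃ d < 5, ∃ k < 4, ∀ x ∈ D,
      affinePerm d k (r x) ∈ D ∧ affinePerm d k (r (affinePerm d k (r x))) = x := by
  decide +kernel

theorem hasPartialInvolutions_frobenius20 : HasPartialInvolutions frobenius20 := by
  intro q D
  obtain ⟨d, -, k, -, h₀, h₁⟩ :=
    exists_affinePerm_apply_zero_one (q 0) (q 1) (q.injective.ne zero_ne_one)
  set c := affinePerm d k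
  obtain ⟨d', -, k', -, hinv⟩ := exists_affinePerm_partialInvolution_of_fixed (c⁻¹ * q)
    (by simp [← h₀]) (by simp [← h₁]) D
  exact ⟨affinePerm d' k' * c⁻¹, mul_mem (affinePerm_mem_frobenius20 d' k')
    (inv_mem (affinePerm_mem_frobenius20 d k)), hinv⟩

end Frobenius

theorem stmt15 (m : ℕ) :
    IsMultFree ((frobenius20.prod (⊤ : Subgroup (Equiv.Perm (Fin m)))).map
      (Equiv.Perm.sumCongrHom (Fin 5) (Fin m))) :=
  isMultFree_of_forall_inv_mem_doubleCoset hasPartialInvolutions_frobenius20.inv_mem_doubleCoset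
end

section
/- Let F be a field of prime characteristic p and let n ≥ 1. Suppose G ≤ S_n is a subgroup such that the permutation character of S_n on the cosets of G (over ℂ) is multiplicity-free. Then every direct summand U of the permutation FS_n-module F[S_n/G] (the F-vector space with basis the cosets S_n/G, with S_n permuting the basis) is self-dual: U is isomorphic as an FS_n-module to its contragredient dual U* (the dual space with action (g·f)(u) = f(g⁻¹·u)). -/
open CategoryTheory

/-- The permutation module of `Sₙ` over `F` with basis the cosets `Sₙ/G`. -/
noncomputable def permModule (F : Type) [Field F] (n : ℕ)
    (G : Subgroup (Equiv.Perm (Fin n))) : FDRep F (Equiv.Perm (Fin n)) :=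
  FDRep.of (Representation.ofMulAction F (Equiv.Perm (Fin n)) (Equiv.Perm (Fin n) ⧸ G))

/-!
Averaging over `H` gives the idempotent `e` of the group algebra of `Γ` that projects every
representation onto its `H`-fixed vectors. Multiplicity-freeness says that `e` has rank at most one
on every irreducible complex representation, so `e g e` acts there as `tr (g e) • e`. If every
element of `Γ` is conjugate to its inverse, then all characters are invariant under `g ↦ g⁻¹` and
`tr (g⁻¹ e) = tr (g e)`. Hence `e g⁻¹ e = e g e` in `ℂ[Γ]`, which means `g⁻¹ ∈ H g H`: any two
points of `Γ ⧸ H` are swapped by some element of `Γ`.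

Over an arbitrary field `F`, such a swap makes every endomorphism of `F[Γ ⧸ H]` self-adjoint for
the invariant form with orthonormal basis `Γ ⧸ H`. This applies to the projection onto a direct
summand, so the form restricts to a nondegenerate invariant form on the summand, which identifies
it with its contragredient.
-/

open scoped MonoidAlgebra MonoidalCategory

section Projection

variable {k V : Type*} [Field k] [AddCommGroup V] [Module k V] [FiniteDimensional k V]

theorem mul_mul_eq_trace_smul_of_isProj {W : Submodule k V} {P : Module.End k V}
    (hP : LinearMap.IsProj W P) (hW : Module.finrank k W ≤ 1) (A : Module.End k V) :
    P * A * P = LinearMap.trace k V (A * P) • P := by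
  obtain ⟨w, hw⟩ := finrank_le_one_iff.mp hW
  obtain ⟨c, hc⟩ := hw ⟨P (A w), hP.map_mem _⟩
  have hPAP : P * A * P = c • P := by
    ext v
    obtain ⟨t, ht⟩ := hw ⟨P v, hP.map_mem v⟩
    have ht : t • (w : V) = P v := congrArg Subtype.val ht
    have hc : c • (w : V) = P (A w) := congrArg Subtype.val hc
    simp only [Module.End.mul_apply, LinearMap.smul_apply, ← ht, map_smul, ← hc, smul_comm c t]
  have hPP : P * P = P := LinearMap.ext fun v => hP.map_id _ (hP.map_mem v)
  have htrace : LinearMap.trace k V (A * P) = c * Module.finrank k W := by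
    calc LinearMap.trace k V (A * P)
      _ = LinearMap.trace k V (P * A * P) := by
          rw [mul_assoc, LinearMap.trace_mul_comm k P, mul_assoc, hPP]
      _ = c * Module.finrank k W := by rw [hPAP, map_smul, hP.trace, smul_eq_mul]
  rw [hPAP, htrace]
  obtain hW | hW : Module.finrank k W = 1 ∨ Module.finrank k W = 0 := by lia
  · simp [hW]
  · have hP0 : P = 0 := by
      ext v
      simpa [Submodule.finrank_eq_zero.mp hW] using hP.map_mem v
    simp [hP0]

end Projection

section SubgroupAverage

variable (k : Type*) {Γ : Type*} [CommRing k] [Group Γ] (H : Subgroup Γ) [Fintype H]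
  [Invertible (Fintype.card H : k)]

/-- The idempotent `e_H = |H|⁻¹ ∑_{h ∈ H} h` of the group algebra of `Γ`. In every representation
of `Γ` it acts as the projection onto the `H`-fixed vectors. -/
noncomputable def subgroupAverage : k[Γ] :=
  ⅟(Fintype.card H : k) • ∑ h : H, MonoidAlgebra.single (h : Γ) 1

variable {k H}

theorem constr_subgroupAverage_mul_single_mul_subgroupAverage {φ : Γ → k}
    (hφ : ∀ h ∈ H, ∀ h' ∈ H, ∀ g, φ (h * g * h') = φ g) (g : Γ) :
    (MonoidAlgebra.basis Γ k).constr k φ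
      (subgroupAverage k H * MonoidAlgebra.single g 1 * subgroupAverage k H) = φ g := by
  have hbasis (x : Γ) : (MonoidAlgebra.basis Γ k).constr k φ (MonoidAlgebra.single x 1) = φ x :=
    (MonoidAlgebra.basis Γ k).constr_basis k φ x
  simp [subgroupAverage, Finset.sum_mul, Finset.mul_sum, MonoidAlgebra.single_mul_single,
    hbasis, hφ]

theorem mem_doubleCoset_of_subgroupAverage_mul_single_mul_eq [Nontrivial k] {x y : Γ}
    (hxy : subgroupAverage k H * MonoidAlgebra.single x 1 * subgroupAverage k H =
      subgroupAverage k H * MonoidAlgebra.single y 1 * subgroupAverage k H) :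
    y ∈ DoubleCoset.doubleCoset x H H := by
  classical
  let φ (g : Γ) : k :=
    if DoubleCoset.doubleCoset g H H = DoubleCoset.doubleCoset x H H then 1 else 0
  have hφ : ∀ h ∈ H, ∀ h' ∈ H, ∀ g, φ (h * g * h') = φ g := by
    intro h hh h' hh' g
    have hmem : h * g * h' ∈ DoubleCoset.doubleCoset g (H : Set Γ) H :=
      DoubleCoset.mem_doubleCoset.mpr ⟨h, hh, h', hh', rfl⟩
    simp only [φ, DoubleCoset.doubleCoset_eq_of_mem hmem]
  have hφxy : φ x = φ y := by
    rw [← constr_subgroupAverage_mul_single_mul_subgroupAverage hφ x, hxy,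
      constr_subgroupAverage_mul_single_mul_subgroupAverage hφ y]
  have hcoset : DoubleCoset.doubleCoset y (H : Set Γ) H = DoubleCoset.doubleCoset x H H := by
    simpa [φ] using hφxy
  exact hcoset ▸ DoubleCoset.mem_doubleCoset_self H H y

theorem asAlgebraHom_subgroupAverage {V : Type*} [AddCommGroup V] [Module k V]
    (ρ : Representation k Γ V) :
    ρ.asAlgebraHom (subgroupAverage k H) = Representation.averageMap (ρ.comp H.subtype) := by
  simp [subgroupAverage, Representation.averageMap, GroupAlgebra.average]

end SubgroupAverage

section Character

variable {k Γ V : Type*} [Field k] [Group Γ] [AddCommGroup V] [Module k V]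
  (ρ : Representation k Γ V)

theorem character_inv_of_isConj {g : Γ} (hg : IsConj g g⁻¹) :
    ρ.character g⁻¹ = ρ.character g := by
  obtain ⟨c, hc⟩ := isConj_iff.mp hg
  rw [← hc, ρ.char_conj]

variable {H : Subgroup Γ} [Fintype H] [Invertible (Fintype.card H : k)]

theorem trace_asAlgebraHom_single_mul_subgroupAverage (g : Γ) :
    LinearMap.trace k V (ρ.asAlgebraHom (MonoidAlgebra.single g 1 * subgroupAverage k H)) =
      ⅟(Fintype.card H : k) * ∑ h : H, ρ.character (g * h) := by
  simp [subgroupAverage, Finset.mul_sum, Representation.character]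

theorem trace_asAlgebraHom_single_inv_mul_subgroupAverage (hΓ : ∀ g : Γ, IsConj g g⁻¹) (g : Γ) :
    LinearMap.trace k V (ρ.asAlgebraHom (MonoidAlgebra.single g⁻¹ 1 * subgroupAverage k H)) =
      LinearMap.trace k V (ρ.asAlgebraHom (MonoidAlgebra.single g 1 * subgroupAverage k H)) := by
  simp only [trace_asAlgebraHom_single_mul_subgroupAverage]
  congr 1
  refine Fintype.sum_equiv (Equiv.inv H) _ _ fun h => ?_
  calc ρ.character (g⁻¹ * h)
    _ = ρ.character (g⁻¹ * h)⁻¹ := (character_inv_of_isConj ρ (hΓ _)).symm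
    _ = ρ.character (g * (h : Γ)⁻¹) := by rw [mul_inv_rev, inv_inv, ρ.char_mul_comm]

theorem asAlgebraHom_subgroupAverage_mul_single_inv_mul [FiniteDimensional k V]
    (hΓ : ∀ g : Γ, IsConj g g⁻¹)
    (hV : Module.finrank k (Representation.invariants (ρ.comp H.subtype)) ≤ 1) (g : Γ) :
    ρ.asAlgebraHom (subgroupAverage k H * MonoidAlgebra.single g⁻¹ 1 * subgroupAverage k H) =
      ρ.asAlgebraHom (subgroupAverage k H * MonoidAlgebra.single g 1 * subgroupAverage k H) := by
  have hproj : LinearMap.IsProj (Representation.invariants (ρ.comp H.subtype))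
      (ρ.asAlgebraHom (subgroupAverage k H)) := by
    rw [asAlgebraHom_subgroupAverage]
    exact Representation.isProj_averageMap _
  have hscalar (x : Γ) :
      ρ.asAlgebraHom (subgroupAverage k H * MonoidAlgebra.single x 1 * subgroupAverage k H) =
        LinearMap.trace k V (ρ.asAlgebraHom (MonoidAlgebra.single x 1 * subgroupAverage k H)) •
          ρ.asAlgebraHom (subgroupAverage k H) := by
    simp only [map_mul, mul_mul_eq_trace_smul_of_isProj hproj hV]
  rw [hscalar, hscalar, trace_asAlgebraHom_single_inv_mul_subgroupAverage ρ hΓ]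

end Character

section Irreducible

universe u v

variable {k : Type u} {Γ : Type v} [Field k] [Group Γ]

theorem asAlgebraHom_ofModule' (M : Type*) [AddCommGroup M] [Module k M] [Module k[Γ] M]
    [IsScalarTower k k[Γ] M] :
    (Representation.ofModule' M : Representation k Γ M).asAlgebraHom = Algebra.lsmul k k M :=
  (MonoidAlgebra.lift k (M →ₗ[k] M) Γ).apply_symm_apply _

theorem isIrreducible_ofModule' (M : Type*) [AddCommGroup M] [Module k M] [Module k[Γ] M]
    [IsScalarTower k k[Γ] M] [IsSimpleModule k[Γ] M] :
    (Representation.ofModule' M : Representation k Γ M).IsIrreducible := by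
  rw [Representation.irreducible_iff_isSimpleModule_asModule]
  let ρ : Representation k Γ M := Representation.ofModule' M
  refine IsSimpleModule.congr (N := M) { ρ.asModuleEquiv with map_smul' := fun a m => ?_ }
  exact (ρ.asModuleEquiv_map_smul a m).trans
    (LinearMap.congr_fun (DFunLike.congr_fun (asAlgebraHom_ofModule' M) a) _)

theorem eq_of_forall_isIrreducible_asAlgebraHom_eq [Finite Γ] [NeZero (Nat.card Γ : k)]
    {a b : k[Γ]}
    (hab : ∀ (V : Type (max u v)) [AddCommGroup V] [Module k V] [FiniteDimensional k V]
      (ρ : Representation k Γ V) [ρ.IsIrreducible], ρ.asAlgebraHom a = ρ.asAlgebraHom b) :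
    a = b := by
  rw [← sub_eq_zero, ← Submodule.mem_bot k[Γ], ← IsSemisimpleRing.jacobson_eq_bot k[Γ],
    Ring.jacobson, Module.jacobson, Submodule.mem_sInf]
  intro I hI
  have : IsSimpleModule k[Γ] (k[Γ] ⧸ I) := isSimpleModule_iff_isCoatom.mpr hI
  have : FiniteDimensional k (k[Γ] ⧸ I) := Module.Finite.trans k[Γ] _
  have := isIrreducible_ofModule' (k := k) (Γ := Γ) (k[Γ] ⧸ I)
  have hab_one := LinearMap.congr_fun (hab _ (Representation.ofModule' (k[Γ] ⧸ I)))
    (Submodule.Quotient.mk 1)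
  simpa [asAlgebraHom_ofModule', ← Submodule.Quotient.mk_smul, Submodule.Quotient.eq]
    using hab_one

theorem simple_fdRep_of_isIrreducible {k Γ V : Type u} [Field k] [IsAlgClosed k] [Group Γ]
    [Finite Γ] [NeZero (Nat.card Γ : k)] [AddCommGroup V] [Module k V] [FiniteDimensional k V]
    (ρ : Representation k Γ V) [ρ.IsIrreducible] : Simple (FDRep.of ρ) := by
  rw [FDRep.simple_iff_end_is_rank_one]
  let homEquiv : (FDRep.of ρ ⟶ FDRep.of ρ) ≃ₗ[k] Representation.IntertwiningMap ρ ρ :=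
    (Representation.linHom.invariantsEquivFDRepHom (FDRep.of ρ) (FDRep.of ρ)).symm.trans
      (Representation.invariantsEquivIntertwiningMap ρ ρ)
  rw [homEquiv.finrank_eq, Representation.IsIrreducible.finrank_intertwiningMap_self ρ]

end Irreducible

theorem IsMultFree.inv_mem_doubleCoset {Γ : Type} [Group Γ] [Finite Γ] {H : Subgroup Γ}
    (hH : IsMultFree H) (hΓ : ∀ g : Γ, IsConj g g⁻¹) (g : Γ) :
    g⁻¹ ∈ DoubleCoset.doubleCoset g H H := by
  have := Fintype.ofFinite H
  have : Invertible (Fintype.card H : ℂ) := invertibleOfNonzero (by simp)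
  have : NeZero (Nat.card Γ : ℂ) := ⟨by simpa using Nat.card_pos.ne'⟩
  refine mem_doubleCoset_of_subgroupAverage_mul_single_mul_eq (k := ℂ) <| Eq.symm <|
    eq_of_forall_isIrreducible_asAlgebraHom_eq fun V _ _ _ ρ _ => ?_
  exact asAlgebraHom_subgroupAverage_mul_single_inv_mul ρ hΓ
    (hH _ (simple_fdRep_of_isIrreducible ρ)) g

/-- Any two points are swapped by some group element ("generously transitive" in the sense of
P. M. Neumann); equivalently, the action is transitive and all its orbitals are symmetric. -/
def IsGenerouslyTransitive (Γ Ω : Type*) [SMul Γ Ω] : Prop :=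
  ∀ x y : Ω, ∃ g : Γ, g • x = y ∧ g • y = x

theorem isGenerouslyTransitive_quotient {Γ : Type*} [Group Γ] {H : Subgroup Γ}
    (hH : ∀ g : Γ, g⁻¹ ∈ DoubleCoset.doubleCoset g H H) : IsGenerouslyTransitive Γ (Γ ⧸ H) := by
  intro x y
  induction x using QuotientGroup.induction_on with | H a =>
  induction y using QuotientGroup.induction_on with | H b =>
  obtain ⟨h, hh, h', hh', hinv⟩ := DoubleCoset.mem_doubleCoset.mp (hH (a⁻¹ * b))
  refine ⟨b * h * a⁻¹, ?_, ?_⟩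
  · rw [MulAction.Quotient.smul_coe, eq_comm, QuotientGroup.eq]
    simpa [mul_assoc] using hh
  · have hswap : a = b * h * a⁻¹ * b * h' := by
      simpa [mul_assoc, inv_mul_eq_iff_eq_mul] using hinv
    rw [MulAction.Quotient.smul_coe, QuotientGroup.eq, smul_eq_mul, inv_mul_eq_iff_eq_mul.mpr hswap]
    exact hh'

section BilinearForm

variable {R M : Type*} [CommSemiring R] [AddCommMonoid M] [Module R M]

theorem toDual_comm {Ω : Type*} [DecidableEq Ω] (b : Module.Basis Ω R M) (x y : M) :
    b.toDual x y = b.toDual y x := by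
  have hflip : b.toDual = b.toDual.flip :=
    b.ext fun i => b.ext fun j => by simp only [LinearMap.flip_apply, b.toDual_apply, eq_comm]
  exact LinearMap.congr_fun₂ hflip x y

section PermutationBasis

variable {Γ Ω : Type*} [Group Γ] [MulAction Γ Ω] [DecidableEq Ω] (b : Module.Basis Ω R M)
  {ρ : Representation R Γ M}

theorem toDual_map_map (hρ : ∀ g ω, ρ g (b ω) = b (g • ω)) (g : Γ) (x y : M) :
    b.toDual (ρ g x) (ρ g y) = b.toDual x y := by
  have hcomp : b.toDual.compl₁₂ (ρ g) (ρ g) = b.toDual :=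
    b.ext fun i => b.ext fun j => by simp [hρ, b.toDual_apply]
  exact LinearMap.congr_fun₂ hcomp x y

theorem isSelfAdjoint_toDual_of_isGenerouslyTransitive (hΩ : IsGenerouslyTransitive Γ Ω)
    (hρ : ∀ g ω, ρ g (b ω) = b (g • ω)) {f : M →ₗ[R] M} (hf : ∀ g x, f (ρ g x) = ρ g (f x)) :
    LinearMap.IsSelfAdjoint b.toDual f := by
  rw [LinearMap.IsSelfAdjoint, LinearMap.isAdjointPair_iff_comp_eq_compl₂]
  refine b.ext fun i => b.ext fun j => ?_
  obtain ⟨g, rfl, hg⟩ := hΩ i j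
  calc b.toDual (f (b i)) (b (g • i))
    _ = b.toDual (ρ g (f (b i))) (ρ g (b (g • i))) := (toDual_map_map b hρ g _ _).symm
    _ = b.toDual (f (b (g • i))) (b i) := by rw [← hf, hρ, hρ, hg]
    _ = b.toDual (b i) (f (b (g • i))) := toDual_comm b _ _

end PermutationBasis

theorem injective_compl₁₂_of_isSelfAdjoint {N : Type*} [AddCommMonoid N] [Module R N]
    {B : M →ₗ[R] M →ₗ[R] R} (hB : Function.Injective B) {i : N →ₗ[R] M} {r : M →ₗ[R] N}
    (hri : r ∘ₗ i = LinearMap.id) (hir : LinearMap.IsSelfAdjoint B (i ∘ₗ r)) :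
    Function.Injective (B.compl₁₂ i i) := by
  have hi : Function.Injective i :=
    Function.LeftInverse.injective (g := r) (LinearMap.congr_fun hri)
  have hrestrict (u : N) : B.compl₁₂ i i u ∘ₗ r = B (i u) := by
    ext x
    calc B (i u) (i (r x))
      _ = B (i (r (i u))) x := (hir (i u) x).symm
      _ = B (i u) x := by rw [← LinearMap.comp_apply r i, hri, LinearMap.id_apply]
  intro u v huv
  refine hi (hB ?_)
  rw [← hrestrict u, ← hrestrict v, huv]

end BilinearForm

section RightDual

variable {F : Type*} [Field F]

theorem rightAdjointMate_hom_hom_apply {X Y : FGModuleCat F} (f : X ⟶ Y) (φ : Module.Dual F Y) :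
    (fᘁ).hom.hom φ = φ ∘ₗ f.hom.hom := by
  refine LinearMap.ext fun v => ?_
  exact congrArg (fun q => q.hom.hom (φ ⊗ₜ[F] v)) (rightAdjointMate_comp_evaluation f)

variable {Γ : Type*} [Group Γ]

/-- The identification of the contragredient representation `U*` with the right dual `Uᘁ` of the
rigid category `FDRep F Γ`. -/
noncomputable def dualIsoRightDual (U : FDRep F Γ) :
    FDRep.of (Representation.dual U.ρ) ≅ Uᘁ :=
  Action.mkIso (Iso.refl _) fun g => by
    ext φ
    rw [Action.rightDual_ρ]
    exact (rightAdjointMate_hom_hom_apply _ φ).symm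

theorem nonempty_iso_rightDual_of_injective (U : FDRep F Γ) {B : U.V →ₗ[F] Module.Dual F U.V}
    (hB : Function.Injective B) (hinv : ∀ g u v, B (U.ρ g u) (U.ρ g v) = B u v) :
    Nonempty (U ≅ Uᘁ) := by
  let e : U.V ≃ₗ[F] Module.Dual F U.V :=
    LinearEquiv.ofInjectiveOfFinrankEq B hB Subspace.dual_finrank_eq.symm
  have he (g : Γ) (u : U.V) : e (U.ρ g u) = Representation.dual U.ρ g (e u) := by
    ext v
    calc B (U.ρ g u) v
      _ = B (U.ρ g u) (U.ρ g (U.ρ g⁻¹ v)) := by simp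
      _ = B u (U.ρ g⁻¹ v) := hinv g u _
  let dualIso : U ≅ FDRep.of (Representation.dual U.ρ) :=
    Action.mkIso e.toFGModuleCatIso fun g => by
      ext u v
      exact LinearMap.congr_fun (he g u) v
  exact ⟨dualIso.trans (dualIsoRightDual U)⟩

theorem hom_ρ_apply {X Y : FDRep F Γ} (f : X ⟶ Y) (g : Γ) (x : X.V) :
    f.hom.hom.hom (X.ρ g x) = Y.ρ g (f.hom.hom.hom x) :=
  congrArg (fun q => q.hom.hom x) (f.comm g)

theorem nonempty_iso_rightDual_of_retract {Ω : Type*} [MulAction Γ Ω]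
    (hΩ : IsGenerouslyTransitive Γ Ω) {U X : FDRep F Γ} (b : Module.Basis Ω F X.V)
    (hb : ∀ g ω, X.ρ g (b ω) = b (g • ω)) (i : U ⟶ X) (r : X ⟶ U) (hir : i ≫ r = 𝟙 U) :
    Nonempty (U ≅ Uᘁ) := by
  classical
  let i' : U.V →ₗ[F] X.V := i.hom.hom.hom
  let r' : X.V →ₗ[F] U.V := r.hom.hom.hom
  have hri : r' ∘ₗ i' = LinearMap.id := congrArg (fun f : U ⟶ U => f.hom.hom.hom) hir
  have hself : LinearMap.IsSelfAdjoint b.toDual (i' ∘ₗ r') :=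
    isSelfAdjoint_toDual_of_isGenerouslyTransitive b hΩ hb (hom_ρ_apply (r ≫ i))
  refine nonempty_iso_rightDual_of_injective U
    (injective_compl₁₂_of_isSelfAdjoint b.toDual_injective hri hself) fun g u v => ?_
  calc b.toDual (i' (U.ρ g u)) (i' (U.ρ g v))
    _ = b.toDual (X.ρ g (i' u)) (X.ρ g (i' v)) := by simp only [i', hom_ρ_apply]
    _ = b.toDual (i' u) (i' v) := toDual_map_map b hb g _ _

end RightDual

theorem stmt18_general {F : Type*} [Field F] {Γ : Type} [Group Γ] [Finite Γ]
    (hΓ : ∀ g : Γ, IsConj g g⁻¹) {H : Subgroup Γ} (hH : IsMultFree H) {U : FDRep F Γ}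
    (i : U ⟶ FDRep.of (Representation.ofMulAction F Γ (Γ ⧸ H)))
    (r : FDRep.of (Representation.ofMulAction F Γ (Γ ⧸ H)) ⟶ U) (hir : i ≫ r = 𝟙 U) :
    Nonempty (U ≅ Uᘁ) :=
  nonempty_iso_rightDual_of_retract
    (isGenerouslyTransitive_quotient (hH.inv_mem_doubleCoset hΓ)) (MonoidAlgebra.basis (Γ ⧸ H) F)
    (by simp) i r hir

theorem stmt18 (F : Type) [Field F] (p : ℕ) (hp : p.Prime) [CharP F p]
    (n : ℕ) (hn : 1 ≤ n) (G : Subgroup (Equiv.Perm (Fin n)))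
    (hmf : IsMultFree G)
    -- `U` is a direct summand of the permutation module `F[Sₙ/G]`,
    -- i.e. a retract of it in the category of finite-dimensional `F Sₙ`-modules
    (U : FDRep F (Equiv.Perm (Fin n)))
    (i : U ⟶ permModule F n G) (r : permModule F n G ⟶ U) (hir : i ≫ r = 𝟙 U) :
    Nonempty (U ≅ Uᘁ) :=
  stmt18_general (fun g => by rw [Equiv.Perm.isConj_iff_cycleType_eq, Equiv.Perm.cycleType_inv])
    hmf i r hir
end
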